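/- Let I ≥ 1 and, for each element i ∈ {1,…,I} (indices taken modulo I to encode periodic boundary conditions), let Δx_i > 0 and let u^i : ℝ → P_K be a differentiable family of polynomials of degree at most K. Suppose a quadrature rule with points ξ₀, …, ξ_N ∈ [−1,1] and weights ω*₀, …, ω*_N exact on P_{2K} is given, and that each element satisfies the DGDLS scheme for the linear advection equation with the full upwind numerical flux: for all t and all v ∈ P_K, (Δx_i/2) · Σ_{n=0}^N ω*_n (∂_t u^i)(t, ξ_n) v(ξ_n) = Σ_{n=0}^N ω*_n u^i(t, ξ_n) v'(ξ_n) − [ u^i(t,1) v(1) − u^{i−1}(t,1) v(−1) ]. Then the scheme is L²-stable: for all t, (d/dt) Σ_{i=1}^I (Δx_i/2) ∫_{−1}^1 u^i(t,ξ)² dξ = − Σ_{i=1}^I ( u^i(t,1) − u^{i+1}(t,−1) )² ≤ 0. -/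

import Mathlib

/-!
Exactness on `P_{2K}` makes the quadrature agree with the integral on `u²` and on `u u'`. Hence the
energy is a finite sum of squared nodal values, which can be differentiated term by term, and the
quadrature inherits integration by parts from the fundamental theorem of calculus. Testing the
scheme with `v = u` gives, on each cell,
`d/dt (Δx / 2) ∫ u² = -u(1)² - u(-1)² + 2 u₋(1) u(-1)`, where `u₋` is the solution on the
neighbouring cell to the left. Shifting the last two terms by one cell under the sum over the
periodic mesh completes the squares of the interface jumps.
-/

open Polynomial

/-- The quadrature rule with nodes `ξ` and weights `ω` integrates all polynomials of degree at most
`d` exactly over the interval from `a` to `b`. Nodes outside the interval are allowed. -/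
def IsExactQuadrature {ι : Type*} [Fintype ι] (ξ ω : ι → ℝ) (a b : ℝ) (d : ℕ) : Prop :=
  ∀ q : ℝ[X], q.degree ≤ d → ∑ n, ω n * q.eval (ξ n) = ∫ x in a..b, q.eval x

/-- The DGDLS scheme for `u_t + u_x = 0` with full upwind flux at one instant, where `u i` and
`du i` are the solution on cell `i` and its time derivative. The cells carry a permutation `next`
sending each one to its right neighbour, which encodes the periodic boundary conditions; upwinding
takes the left interface value of cell `i` from `next.symm i`. -/
def IsUpwindDGDLS {ι κ : Type*} [Fintype ι] (K : ℕ) (ξ ω : ι → ℝ) (next : Equiv.Perm κ)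
    (Δx : κ → ℝ) (u du : κ → ℝ[X]) : Prop :=
  ∀ i, ∀ v : ℝ[X], v.degree ≤ K →
    Δx i / 2 * ∑ n, ω n * (du i).eval (ξ n) * v.eval (ξ n) =
      (∑ n, ω n * (u i).eval (ξ n) * v.derivative.eval (ξ n)) -
        ((u i).eval 1 * v.eval 1 - (u (next.symm i)).eval 1 * v.eval (-1))

theorem intervalIntegral_eval_derivative (p : ℝ[X]) (a b : ℝ) :
    ∫ x in a..b, p.derivative.eval x = p.eval b - p.eval a :=
  intervalIntegral.integral_eq_sub_of_hasDerivAt (fun x _ => p.hasDerivAt x)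
    (p.derivative.continuous.intervalIntegrable a b)

theorem sum_neg_sq_sub_sq_add_two_mul_symm {κ R : Type*} [Fintype κ] [CommRing R]
    (σ : Equiv.Perm κ) (f g : κ → R) :
    ∑ i, (-f i ^ 2 - g i ^ 2 + 2 * f (σ.symm i) * g i) = -∑ i, (f i - g (σ i)) ^ 2 :=
  calc ∑ i, (-f i ^ 2 - g i ^ 2 + 2 * f (σ.symm i) * g i)
      = ∑ i, -f i ^ 2 + ∑ i, (-g i ^ 2 + 2 * f (σ.symm i) * g i) := by
        rw [← Finset.sum_add_distrib]
        exact Finset.sum_congr rfl fun i _ => by ring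
    _ = ∑ i, -f i ^ 2 + ∑ i, (-g (σ i) ^ 2 + 2 * f i * g (σ i)) := by
        rw [← Equiv.sum_comp σ fun i => -g i ^ 2 + 2 * f (σ.symm i) * g i]
        simp only [Equiv.symm_apply_apply]
    _ = -∑ i, (f i - g (σ i)) ^ 2 := by
        rw [← Finset.sum_add_distrib, ← Finset.sum_neg_distrib]
        exact Finset.sum_congr rfl fun i _ => by ring

namespace IsExactQuadrature

variable {ι : Type*} [Fintype ι] {ξ ω : ι → ℝ} {a b : ℝ} {d K : ℕ}

theorem summation_by_parts (h : IsExactQuadrature ξ ω a b d) {p q : ℝ[X]}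
    (hpq : p.degree + q.degree ≤ d) :
    (∑ n, ω n * p.eval (ξ n) * q.derivative.eval (ξ n)) +
        ∑ n, ω n * q.eval (ξ n) * p.derivative.eval (ξ n) =
      p.eval b * q.eval b - p.eval a * q.eval a := by
  have hdeg : (p * q).derivative.degree ≤ d :=
    degree_derivative_le.trans ((degree_mul_le p q).trans hpq)
  calc _ = ∑ n, ω n * (p * q).derivative.eval (ξ n) := by
        rw [← Finset.sum_add_distrib]
        refine Finset.sum_congr rfl fun n _ => ?_
        simp only [derivative_mul, eval_add, eval_mul]
        ring
    _ = (p * q).eval b - (p * q).eval a := by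
        rw [h _ hdeg, intervalIntegral_eval_derivative]
    _ = _ := by simp only [eval_mul]

theorem sum_eval_mul_eval_derivative (h : IsExactQuadrature ξ ω a b (2 * K)) {p : ℝ[X]}
    (hp : p.degree ≤ K) :
    ∑ n, ω n * p.eval (ξ n) * p.derivative.eval (ξ n) = (p.eval b ^ 2 - p.eval a ^ 2) / 2 := by
  have hpp : p.degree + p.degree ≤ (2 * K : ℕ) := by
    simpa only [two_mul, Nat.cast_add] using add_le_add hp hp
  linear_combination (h.summation_by_parts hpp) / 2

theorem sum_eval_sq (h : IsExactQuadrature ξ ω a b (2 * K)) {p : ℝ[X]} (hp : p.degree ≤ K) :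
    ∑ n, ω n * p.eval (ξ n) ^ 2 = ∫ x in a..b, p.eval x ^ 2 := by
  have hdeg : (p ^ 2).degree ≤ (2 * K : ℕ) := by
    simpa only [Nat.cast_mul] using degree_pow_le_of_le 2 hp
  simpa only [eval_pow] using h _ hdeg

theorem hasDerivAt_integral_sq (h : IsExactQuadrature ξ ω a b (2 * K)) {p : ℝ → ℝ[X]}
    {dp : ℝ[X]} {t : ℝ} (hp : ∀ s, (p s).degree ≤ K)
    (hderiv : ∀ n, HasDerivAt (fun s => (p s).eval (ξ n)) (dp.eval (ξ n)) t) :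
    HasDerivAt (fun s => ∫ x in a..b, (p s).eval x ^ 2)
      (2 * ∑ n, ω n * dp.eval (ξ n) * (p t).eval (ξ n)) t := by
  simp only [← h.sum_eval_sq (hp _), Finset.mul_sum]
  refine HasDerivAt.fun_sum fun n _ => (((hderiv n).fun_pow 2).const_mul (ω n)).congr_deriv ?_
  push_cast
  ring

end IsExactQuadrature

theorem IsUpwindDGDLS.cell_energy_rate {ι κ : Type*} [Fintype ι] {K : ℕ} {ξ ω : ι → ℝ}
    {next : Equiv.Perm κ} {Δx : κ → ℝ} {u du : κ → ℝ[X]}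
    (scheme : IsUpwindDGDLS K ξ ω next Δx u du)
    (hexact : IsExactQuadrature ξ ω (-1) 1 (2 * K)) {i : κ} (hu : (u i).degree ≤ K) :
    Δx i / 2 * (2 * ∑ n, ω n * (du i).eval (ξ n) * (u i).eval (ξ n)) =
      -(u i).eval 1 ^ 2 - (u i).eval (-1) ^ 2 +
        2 * (u (next.symm i)).eval 1 * (u i).eval (-1) := by
  linear_combination 2 * scheme i (u i) hu + 2 * hexact.sum_eval_mul_eval_derivative hu

theorem dgdls_l2_stability_linear_advection_upwind_general {ι κ : Type*} [Fintype ι] [Fintype κ]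
    {K : ℕ} {ξ ω : ι → ℝ} (hexact : IsExactQuadrature ξ ω (-1) 1 (2 * K))
    {next : Equiv.Perm κ} {Δx : κ → ℝ} {u : κ → ℝ → ℝ[X]} {du : κ → ℝ[X]} {t : ℝ}
    (hu : ∀ i s, (u i s).degree ≤ K)
    (hderiv : ∀ i x, HasDerivAt (fun s => (u i s).eval x) ((du i).eval x) t)
    (scheme : IsUpwindDGDLS K ξ ω next Δx (fun i => u i t) du) :
    HasDerivAt (fun s => ∑ i, Δx i / 2 * ∫ x in (-1 : ℝ)..1, (u i s).eval x ^ 2)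
      (-∑ i, ((u i t).eval 1 - (u (next i) t).eval (-1)) ^ 2) t ∧
    -∑ i, ((u i t).eval 1 - (u (next i) t).eval (-1)) ^ 2 ≤ 0 := by
  refine ⟨?_, neg_nonpos.mpr (Finset.sum_nonneg fun i _ => sq_nonneg _)⟩
  rw [← sum_neg_sq_sub_sq_add_two_mul_symm next (fun i => (u i t).eval 1)
    fun i => (u i t).eval (-1)]
  refine HasDerivAt.fun_sum fun i _ => ?_
  rw [← scheme.cell_energy_rate hexact (hu i t)]
  exact (hexact.hasDerivAt_integral_sq (hu i) fun n => hderiv i (ξ n)).const_mul (Δx i / 2)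

theorem dgdls_l2_stability_linear_advection_upwind
    (K N I : ℕ) (hI : 1 ≤ I) [NeZero I]
    (ξ : Fin (N + 1) → ℝ) (hξ : ∀ n, ξ n ∈ Set.Icc (-1 : ℝ) 1)
    (ω : Fin (N + 1) → ℝ)
    (hexact : ∀ q : Polynomial ℝ, q.degree ≤ (2 * K : ℕ) →
      ∑ n : Fin (N + 1), ω n * q.eval (ξ n) = ∫ x in (-1 : ℝ)..1, q.eval x)
    (Δx : Fin I → ℝ) (hΔx : ∀ i, 0 < Δx i)
    (u du : Fin I → ℝ → Polynomial ℝ)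
    (hu : ∀ i t, (u i t).degree ≤ K) (hdu : ∀ i t, (du i t).degree ≤ K)
    (hderiv : ∀ i, ∀ t x : ℝ,
      HasDerivAt (fun s => (u i s).eval x) ((du i t).eval x) t)
    (scheme : ∀ i : Fin I, ∀ t : ℝ, ∀ v : Polynomial ℝ, v.degree ≤ K →
      Δx i / 2 * ∑ n : Fin (N + 1), ω n * (du i t).eval (ξ n) * v.eval (ξ n) =
        (∑ n : Fin (N + 1), ω n * (u i t).eval (ξ n) * v.derivative.eval (ξ n)) -
          ((u i t).eval 1 * v.eval 1 - (u (i - 1) t).eval 1 * v.eval (-1)))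
    (t : ℝ) :
    HasDerivAt
      (fun s => ∑ i : Fin I, Δx i / 2 * ∫ x in (-1 : ℝ)..1, ((u i s).eval x) ^ 2)
      (-∑ i : Fin I, ((u i t).eval 1 - (u (i + 1) t).eval (-1)) ^ 2) t ∧
    -∑ i : Fin I, ((u i t).eval 1 - (u (i + 1) t).eval (-1)) ^ 2 ≤ 0 :=
  -- Unlike that of `Equiv.addRight 1`, the inverse of this shift is `i ↦ i - 1` by definition.
  dgdls_l2_stability_linear_advection_upwind_general (next := (Equiv.subRight 1).symm)
    hexact hu (fun i => hderiv i t) (fun i => scheme i t)
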